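/- Let ℓ ≥ 2, J ⊆ ℤ/ℓℤ, and let θ ∈ ℂ^(ℤ/ℓℤ) be J-standard with Σ_{i ∈ ℤ/ℓℤ} θ_i ≠ 0. Let ν₁, ν₂ be partitions that are both ℓ-cores and J-cores, and let r₁, r₂ be nonnegative integers. Then (Res_ℓ(ν₁) + r₁·δ_ℓ) − (Res_ℓ(ν₂) + r₂·δ_ℓ) lies in Σ_{j ∈ J} ℕ·e_j (where e_j is the j-th standard basis vector of ℤ^(ℤ/ℓℤ)) if and only if r₁ ≥ r₂ and there exists a partition λ with Core_ℓ(λ) = ν₁, |λ| = |ν₁| + ℓ·(r₁ − r₂), and Core_J(λ) = ν₂. -/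

import Mathlib

namespace CM

/-- The (non-linear) action of the simple reflection `s_j` on `ℤ^(ℤ/ℓℤ)`. -/
def sInt (ℓ : ℕ) (j : ZMod ℓ) (d : ZMod ℓ → ℤ) : ZMod ℓ → ℤ := fun i =>
  if i = j then (if j = 0 then 1 else 0) + d (j + 1) + d (j - 1) - d j else d i

/-- The linear action of the simple reflection `s_j` on `ℂ^(ℤ/ℓℤ)`.
For `i ≠ j` the coefficient of `θ j` is the number of arrows between `i` and `j`
(which is `2` when `ℓ = 2`). -/
def sC (ℓ : ℕ) (j : ZMod ℓ) (θ : ZMod ℓ → ℂ) : ZMod ℓ → ℂ := fun i =>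
  if i = j then -θ j
  else θ i + ((if i = j - 1 then 1 else 0) + (if i = j + 1 then 1 else 0) : ℂ) * θ j

lemma sC_sC (ℓ : ℕ) (j : ZMod ℓ) (θ : ZMod ℓ → ℂ) : sC ℓ j (sC ℓ j θ) = θ := by
  funext i
  by_cases h : i = j
  · subst h; simp [sC]
  · simp [sC, h]

/-- `s_j` as a bijection of `ℂ^(ℤ/ℓℤ)`. -/
def sPerm (ℓ : ℕ) (j : ZMod ℓ) : Equiv.Perm (ZMod ℓ → ℂ) :=
  ⟨sC ℓ j, sC ℓ j, fun θ => sC_sC ℓ j θ, fun θ => sC_sC ℓ j θ⟩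

/-- The group generated by the operators `s_j`, `j ∈ ℤ/ℓℤ`. -/
def Wgrp (ℓ : ℕ) : Subgroup (Equiv.Perm (ZMod ℓ → ℂ)) :=
  Subgroup.closure (Set.range (sPerm ℓ))

/-- The subgroup generated by the operators `s_j`, `j ∈ J`. -/
def WJ (ℓ : ℕ) (J : Set (ZMod ℓ)) : Subgroup (Equiv.Perm (ZMod ℓ → ℂ)) :=
  Subgroup.closure (sPerm ℓ '' J)

/-- `θ` is `J`-standard if its stabilizer in `W` is exactly `W_J`. -/
def JStandard (ℓ : ℕ) (J : Set (ZMod ℓ)) (θ : ZMod ℓ → ℂ) : Prop :=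
  ∀ w ∈ Wgrp ℓ, ((w : (ZMod ℓ → ℂ) → (ZMod ℓ → ℂ)) θ = θ ↔ w ∈ WJ ℓ J)

/-- The `∞`-residue of a box. -/
def rsd (c : ℕ × ℕ) : ℤ := (c.2 : ℤ) - (c.1 : ℤ)

/-- The `ℓ`-residue of a box. -/
def res (ℓ : ℕ) (c : ℕ × ℕ) : ZMod ℓ := (rsd c : ZMod ℓ)

/-- `Res_ℓ(μ) ∈ ℤ^(ℤ/ℓℤ)`: the number of boxes of each `ℓ`-residue. -/
def Res (ℓ : ℕ) (μ : YoungDiagram) : ZMod ℓ → ℤ := fun i =>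
  ((μ.cells.filter (fun c => res ℓ c = i)).card : ℤ)

/-- The constant vector `δ_ℓ = (1,…,1)`. -/
def delta (ℓ : ℕ) : ZMod ℓ → ℤ := fun _ => 1

/-- A box is removable if deleting it leaves a Young diagram. -/
def IsRemovable (μ : YoungDiagram) (c : ℕ × ℕ) : Prop :=
  c ∈ μ.cells ∧ ∃ ν : YoungDiagram, ν.cells = μ.cells.erase c

/-- A box is addable if adjoining it yields a Young diagram. -/
def IsAddable (μ : YoungDiagram) (c : ℕ × ℕ) : Prop :=
  c ∉ μ.cells ∧ ∃ ν : YoungDiagram, ν.cells = insert c μ.cells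

/-- One step: delete one removable box. -/
def RemoveStep (μ ν : YoungDiagram) : Prop :=
  ∃ c, IsRemovable μ c ∧ ν.cells = μ.cells.erase c

/-- `ν` is obtainable from `μ` by successively deleting removable boxes. -/
def Obtainable (μ ν : YoungDiagram) : Prop :=
  Relation.ReflTransGen RemoveStep μ ν

/-- `λ` is an `ℓ`-core: no partition obtainable from `λ` by deleting removable boxes
differs from `λ` by exactly `ℓ` boxes of pairwise distinct `ℓ`-residues. -/
def IsCore (ℓ : ℕ) (lam : YoungDiagram) : Prop :=
  ¬ ∃ μ : YoungDiagram, Obtainable lam μ ∧ (lam.cells \ μ.cells).card = ℓ ∧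
      Set.InjOn (res ℓ) ↑(lam.cells \ μ.cells)

/-- One step of the `ℓ`-core process: delete (via removable-box deletions) `ℓ` boxes
of pairwise distinct `ℓ`-residues. -/
def CoreStep (ℓ : ℕ) (μ ν : YoungDiagram) : Prop :=
  Obtainable μ ν ∧ (μ.cells \ ν.cells).card = ℓ ∧
    Set.InjOn (res ℓ) ↑(μ.cells \ ν.cells)

/-- `ν` is the `ℓ`-core of `λ`: it is an `ℓ`-core reached from `λ` by the core process. -/
def ReachesCore (ℓ : ℕ) (lam ν : YoungDiagram) : Prop :=
  Relation.ReflTransGen (CoreStep ℓ) lam ν ∧ IsCore ℓ ν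

/-- A `J`-removable box: a removable box whose `ℓ`-residue lies in `J`. -/
def IsJRemovable (ℓ : ℕ) (J : Set (ZMod ℓ)) (μ : YoungDiagram) (c : ℕ × ℕ) : Prop :=
  IsRemovable μ c ∧ res ℓ c ∈ J

/-- A `J`-core: a partition with no `J`-removable boxes. -/
def IsJCore (ℓ : ℕ) (J : Set (ZMod ℓ)) (μ : YoungDiagram) : Prop :=
  ∀ c, ¬ IsJRemovable ℓ J μ c

/-- One step: delete one `J`-removable box. -/
def JRemoveStep (ℓ : ℕ) (J : Set (ZMod ℓ)) (μ ν : YoungDiagram) : Prop :=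
  ∃ c, IsJRemovable ℓ J μ c ∧ ν.cells = μ.cells.erase c

/-- `ν` is a `J`-core of `λ`, obtained by successively deleting `J`-removable boxes. -/
def JReaches (ℓ : ℕ) (J : Set (ZMod ℓ)) (lam ν : YoungDiagram) : Prop :=
  Relation.ReflTransGen (JRemoveStep ℓ J) lam ν ∧ IsJCore ℓ J ν

/-!
A partition is encoded by its Maya diagram, with beads at `μ_r - r`. Removing a box moves a bead
one step down, and removing `ℓ` boxes of consecutive contents moves a bead down by `ℓ`. So in an
`ℓ`-core the beads of each residue class form an initial segment, and an `ℓ`-core is determined by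
`Res_ℓ` modulo `δ_ℓ`.

The number of addable minus removable boxes of residue `i` is an affine function of `Res_ℓ`. Its
linear part is minus the Cartan form of type `A^(1)`, which is positive semidefinite with kernel
spanned by `δ_ℓ`. If `Res_ℓ(ν₂) + β = Res_ℓ(ν₁) + k δ_ℓ` with `β ≠ 0` supported on `J`, then, as
`ν₁` has no removable `J`-box, some `i` in the support of `β` has more addable than removable boxes
in `ν₂`; for constant `β` this holds because in total there is one more addable than removable box.
Adding boxes in this way until `β = 0` produces `λ`.
-/

/-- The box in position `k`, counted from `0`, on the diagonal of content `c`. -/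
def diagBox (c : ℤ) (k : ℕ) : ℕ × ℕ := ((-c).toNat + k, c.toNat + k)

/-- The length of the diagonal of content `c`. A partition is encoded by its diagonal lengths. -/
def diag (μ : YoungDiagram) (c : ℤ) : ℕ := (μ.cells.filter (fun x => rsd x = c)).card

/-- The indicator function of the Maya diagram: for `f = diag μ` the value is `1` at the beads
`μ_r - r` (`r ≥ 1`) and `0` elsewhere. It is defined for arbitrary `f` so that it can be used to
recognize sequences of diagonal lengths. -/
def bead (f : ℤ → ℕ) (p : ℤ) : ℤ := (if p < 0 then 1 else 0) + f p - f (p + 1)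

/-- The number of addable boxes of residue `i` minus the number of removable ones, written in
terms of `Res`. -/
def excess (ℓ : ℕ) (μ : YoungDiagram) (i : ZMod ℓ) : ℤ :=
  (if i = 0 then 1 else 0) + Res ℓ μ (i - 1) + Res ℓ μ (i + 1) - 2 * Res ℓ μ i

section Finset

variable {α β : Type*}

lemma card_filter_add_card_filter_sdiff [DecidableEq α] {s t : Finset α} (h : s ⊆ t) (p : α → Prop)
    [DecidablePred p] :
    (s.filter p).card + ((t \ s).filter p).card = (t.filter p).card := by
  rw [← Finset.card_union_of_disjoint (Finset.disjoint_filter_filter Finset.disjoint_sdiff),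
    ← Finset.filter_union, Finset.union_sdiff_of_subset h]

lemma bijOn_of_card_fiber [DecidableEq β] {f : α → β} {s : Finset α} {t : Finset β}
    (h : ∀ b, (s.filter (fun a => f a = b)).card = if b ∈ t then 1 else 0) :
    Set.BijOn f s t := by
  refine ⟨fun a ha => ?_, fun a ha a' ha' haa' => ?_, fun b hb => ?_⟩
  · by_contra hfa
    have hempty := h (f a)
    rw [if_neg (by simpa using hfa), Finset.card_eq_zero, Finset.filter_eq_empty_iff] at hempty
    exact hempty ha rfl
  · have hle : (s.filter (fun x => f x = f a')).card ≤ 1 := by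
      rw [h]; split_ifs <;> simp
    exact Finset.card_le_one.1 hle a (Finset.mem_filter.2 ⟨ha, haa'⟩) a'
      (Finset.mem_filter.2 ⟨ha', rfl⟩)
  · have hpos : 0 < (s.filter (fun a => f a = b)).card := by
      rw [h, if_pos (by simpa using hb)]; exact one_pos
    obtain ⟨a, ha⟩ := Finset.card_pos.1 hpos
    exact ⟨a, (Finset.mem_filter.1 ha).1, (Finset.mem_filter.1 ha).2⟩

lemma eq_range_card_of_isLowerSet {s : Finset ℕ} (h : IsLowerSet (s : Set ℕ)) :
    s = Finset.range s.card := by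
  refine Finset.eq_of_subset_of_card_le (fun k hk => ?_) (Finset.card_range _).le
  have hsub : Finset.range (k + 1) ⊆ s := fun j hj =>
    h (Nat.lt_succ_iff.1 (Finset.mem_range.1 hj)) hk
  simpa [Nat.succ_le_iff] using Finset.card_le_card hsub

end Finset

section Diagonals

variable {μ ν : YoungDiagram} {c p : ℤ}

lemma rsd_diagBox (c : ℤ) (k : ℕ) : rsd (diagBox c k) = c := by
  simp only [rsd, diagBox]; omega

lemma diagBox_rsd (x : ℕ × ℕ) : diagBox (rsd x) (min x.1 x.2) = x := by
  ext <;> simp only [rsd, diagBox] <;> omega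

lemma diagBox_injective (c : ℤ) : Function.Injective (diagBox c) := fun k k' h => by
  simpa [diagBox] using h

lemma diagBox_mem_iff (μ : YoungDiagram) (c : ℤ) (k : ℕ) :
    diagBox c k ∈ μ.cells ↔ k < diag μ c := by
  set s : Finset ℕ := μ.cells.preimage (diagBox c) (diagBox_injective c).injOn with hs
  have hlower : IsLowerSet (s : Set ℕ) := by
    intro k j hjk hk
    simp only [hs, Finset.coe_preimage, Set.mem_preimage, Finset.mem_coe] at hk ⊢
    exact μ.isLowerSet
      (Prod.mk_le_mk.2 ⟨Nat.add_le_add_left hjk _, Nat.add_le_add_left hjk _⟩) hk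
  have hcard : s.card = diag μ c := by
    rw [← Finset.card_image_of_injective s (diagBox_injective c), diag]
    congr 1
    ext x
    simp only [hs, Finset.mem_image, Finset.mem_preimage, Finset.mem_filter]
    constructor
    · rintro ⟨k, hk, rfl⟩
      exact ⟨hk, rsd_diagBox c k⟩
    · rintro ⟨hx, rfl⟩
      exact ⟨_, (diagBox_rsd x).symm ▸ hx, diagBox_rsd x⟩
  rw [← Finset.mem_range, ← hcard, ← eq_range_card_of_isLowerSet hlower, hs, Finset.mem_preimage]

lemma mem_cells_iff_lt_diag (μ : YoungDiagram) (x : ℕ × ℕ) :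
    x ∈ μ.cells ↔ min x.1 x.2 < diag μ (rsd x) := by
  rw [← diagBox_mem_iff, diagBox_rsd]

lemma le_of_diag_le (h : ∀ c, diag ν c ≤ diag μ c) : ν ≤ μ := by
  intro x hx
  rw [← YoungDiagram.mem_cells, mem_cells_iff_lt_diag] at hx ⊢
  exact hx.trans_le (h _)

lemma diag_injective : Function.Injective diag := fun _ _ h =>
  le_antisymm (le_of_diag_le fun c => (congrFun h c).le) (le_of_diag_le fun c => (congrFun h c).ge)

lemma finite_support_diag (μ : YoungDiagram) : (Function.support (diag μ)).Finite := by
  refine (μ.cells.image rsd).finite_toSet.subset fun c hc => ?_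
  obtain ⟨x, hx⟩ := Finset.card_ne_zero.1 hc
  rw [Finset.mem_filter] at hx
  exact Finset.mem_coe.2 (Finset.mem_image.2 ⟨x, hx⟩)

lemma lt_diag_of_diagBox_le {c' : ℤ} {k k' : ℕ} (h : diagBox c' k' ≤ diagBox c k)
    (hk : k < diag μ c) : k' < diag μ c' :=
  (diagBox_mem_iff μ c' k').1 (μ.isLowerSet h ((diagBox_mem_iff μ c k).2 hk))

lemma bead_diag (μ : YoungDiagram) (p : ℤ) : bead (diag μ) p = 0 ∨ bead (diag μ) p = 1 := by
  rcases lt_or_ge p 0 with hp | hp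
  · have h₁ : diag μ p ≤ diag μ (p + 1) := le_of_forall_lt fun k =>
      lt_diag_of_diagBox_le (Prod.mk_le_mk.2 (by omega))
    have h₂ : diag μ (p + 1) - 1 ≤ diag μ p := le_of_forall_lt fun k hk =>
      lt_diag_of_diagBox_le (c := p + 1) (k := k + 1) (Prod.mk_le_mk.2 (by omega)) (by omega)
    simp only [bead, if_pos hp]; omega
  · have h₁ : diag μ (p + 1) ≤ diag μ p := le_of_forall_lt fun k =>
      lt_diag_of_diagBox_le (Prod.mk_le_mk.2 (by omega))
    have h₂ : diag μ p - 1 ≤ diag μ (p + 1) := le_of_forall_lt fun k hk =>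
      lt_diag_of_diagBox_le (c := p) (k := k + 1) (Prod.mk_le_mk.2 (by omega)) (by omega)
    simp only [bead, if_neg hp.not_gt]; omega

lemma isLowerSet_of_bead {f : ℤ → ℕ} (hf : ∀ p, bead f p = 0 ∨ bead f p = 1) :
    IsLowerSet {x : ℕ × ℕ | min x.1 x.2 < f (rsd x)} := by
  have up (a b : ℕ) (h : min (a + 1) b < f (rsd (a + 1, b))) : min a b < f (rsd (a, b)) := by
    have hp := hf (rsd (a + 1, b))
    rw [bead, show rsd (a + 1, b) + 1 = rsd (a, b) by simp only [rsd]; push_cast; ring] at hp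
    split_ifs at hp with hneg <;> simp only [rsd] at h hp hneg ⊢ <;> omega
  have left (a b : ℕ) (h : min a (b + 1) < f (rsd (a, b + 1))) : min a b < f (rsd (a, b)) := by
    have hp := hf (rsd (a, b))
    rw [bead, show rsd (a, b) + 1 = rsd (a, b + 1) by simp only [rsd]; push_cast; ring] at hp
    split_ifs at hp with hneg <;> simp only [rsd] at h hp hneg ⊢ <;> omega
  rintro ⟨a, b⟩ ⟨a', b'⟩ ⟨ha, hb⟩ h
  exact antitone_nat_of_succ_le (f := fun a => min a b' < f (rsd (a, b'))) (fun a => up a b') ha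
    (antitone_nat_of_succ_le (f := fun b => min a b < f (rsd (a, b))) (left a) hb h)

lemma exists_diag_eq {f : ℤ → ℕ} (hfin : (Function.support f).Finite)
    (hf : ∀ p, bead f p = 0 ∨ bead f p = 1) : ∃ μ : YoungDiagram, diag μ = f := by
  let cells := hfin.toFinset.biUnion fun c => (Finset.range (f c)).image (diagBox c)
  have hmem (x : ℕ × ℕ) : x ∈ cells ↔ min x.1 x.2 < f (rsd x) := by
    simp only [cells, Finset.mem_biUnion, Finset.mem_image, Finset.mem_range,
      Set.Finite.mem_toFinset, Function.mem_support]
    constructor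
    · rintro ⟨c, -, k, hk, rfl⟩
      rw [rsd_diagBox]
      refine lt_of_eq_of_lt ?_ hk
      simp only [diagBox]; omega
    · exact fun hx => ⟨rsd x, (Nat.zero_le _).trans_lt hx |>.ne', _, hx, diagBox_rsd x⟩
  have hlower : IsLowerSet (cells : Set (ℕ × ℕ)) := by
    convert isLowerSet_of_bead hf using 1
    ext x; exact hmem x
  refine ⟨⟨cells, hlower⟩, funext fun c => eq_of_forall_lt_iff fun k => ?_⟩
  rw [← diagBox_mem_iff, hmem, rsd_diagBox]
  have hmin : min (diagBox c k).1 (diagBox c k).2 = k := by simp only [diagBox]; omega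
  rw [hmin]

lemma bijOn_rsd_sdiff {t : Finset ℤ} (h : ∀ c, diag μ c = diag ν c + if c ∈ t then 1 else 0) :
    Set.BijOn rsd ↑(μ.cells \ ν.cells) (t : Set ℤ) := by
  have hle : ν ≤ μ := le_of_diag_le fun c => (h c).symm ▸ Nat.le_add_right _ _
  refine bijOn_of_card_fiber fun c => Nat.add_left_cancel (n := diag ν c) ?_
  rw [← h]
  exact card_filter_add_card_filter_sdiff hle fun x => rsd x = c

end Diagonals

section Corners

variable {μ ν : YoungDiagram} {p : ℤ}

lemma obtainable_of_le (h : ν ≤ μ) : Obtainable μ ν := by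
  induction hn : (μ.cells \ ν.cells).card generalizing μ with
  | zero =>
    rw [Finset.card_eq_zero, Finset.sdiff_eq_empty_iff_subset] at hn
    rw [le_antisymm (show μ ≤ ν from hn) h]
    exact Relation.ReflTransGen.refl
  | succ n ih =>
    obtain ⟨x, hx, hmax⟩ := (μ.cells \ ν.cells).exists_maximal (Finset.card_pos.1 (by omega))
    rw [Finset.mem_sdiff] at hx
    have hlower : IsLowerSet (μ.cells.erase x : Set (ℕ × ℕ)) := by
      intro y z hzy hy
      rw [Finset.mem_coe, Finset.mem_erase] at hy ⊢
      refine ⟨?_, μ.isLowerSet hzy hy.2⟩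
      rintro rfl
      have hyν : y ∉ ν.cells := fun hyν => hx.2 (ν.isLowerSet hzy hyν)
      exact hy.1 (le_antisymm (hmax (Finset.mem_sdiff.2 ⟨hy.2, hyν⟩) hzy) hzy)
    let κ : YoungDiagram := ⟨μ.cells.erase x, hlower⟩
    have hνκ : ν ≤ κ := fun y hy => Finset.mem_erase.2 ⟨fun hyx => hx.2 (hyx ▸ hy), h hy⟩
    have hcard : (κ.cells \ ν.cells).card = n := by
      rw [Finset.erase_sdiff_comm, Finset.card_erase_of_mem (Finset.mem_sdiff.2 hx), hn]
      rfl
    exact Relation.ReflTransGen.head ⟨x, ⟨hx.1, κ, rfl⟩, rfl⟩ (ih hνκ hcard)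

lemma Obtainable.le (h : Obtainable μ ν) : ν ≤ μ := by
  induction h with
  | refl => exact le_rfl
  | tail _ hstep ih =>
    obtain ⟨x, -, hx⟩ := hstep
    exact le_trans (YoungDiagram.cells_subset_iff.1 (hx ▸ Finset.erase_subset _ _)) ih

lemma diag_pos_of_bead {q c : ℤ} (hp : bead (diag μ) p = 1) (hq : bead (diag μ) q = 0)
    (hc : c ∈ Finset.Ioc q p) : 0 < diag μ c := by
  rw [Finset.mem_Ioc] at hc
  rcases le_or_gt 0 c with h | h
  · rw [bead, if_neg (by omega)] at hp
    exact lt_diag_of_diagBox_le (c := p) (k := 0) (Prod.mk_le_mk.2 (by omega)) (by omega)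
  · rw [bead, if_pos (by omega)] at hq
    exact lt_diag_of_diagBox_le (c := q + 1) (k := 0) (Prod.mk_le_mk.2 (by omega)) (by omega)

/-- Moving a bead from `p` down to a vacant position `q < p` removes a ribbon. -/
lemma exists_removeRibbon {q : ℤ} (hp : bead (diag μ) p = 1)
    (hq : bead (diag μ) q = 0) :
    ∃ ν : YoungDiagram, ∀ c, diag μ c = diag ν c + if c ∈ Finset.Ioc q p then 1 else 0 := by
  let f (c : ℤ) : ℕ := diag μ c - if c ∈ Finset.Ioc q p then 1 else 0
  have hf (c : ℤ) : diag μ c = f c + if c ∈ Finset.Ioc q p then 1 else 0 := by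
    have hpos := diag_pos_of_bead (c := c) hp hq
    simp only [f]; split_ifs with hc
    · have := hpos hc; omega
    · rfl
  obtain ⟨ν, hν⟩ := exists_diag_eq (f := f)
    ((finite_support_diag μ).subset fun c hc hc' => hc (by simp [f, hc'])) fun r => by
      have hr := bead_diag μ r
      have hrp : r = p → bead (diag μ) r = 1 := fun h => h ▸ hp
      have hrq : r = q → bead (diag μ) r = 0 := fun h => h ▸ hq
      simp only [bead, hf, Finset.mem_Ioc] at hr hrp hrq ⊢
      split_ifs at hr hrp hrq ⊢ <;> omega
  exact ⟨ν, hν ▸ hf⟩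

lemma exists_cells_eq_insert {c : ℤ}
    (h : ∀ c', diag μ c' = diag ν c' + if c' ∈ ({c} : Finset ℤ) then 1 else 0) :
    ∃ x ∉ ν.cells, rsd x = c ∧ μ.cells = insert x ν.cells := by
  have hle : ν ≤ μ := le_of_diag_le fun c' => (h c').symm ▸ Nat.le_add_right _ _
  have hbij := bijOn_rsd_sdiff h
  obtain ⟨x, hx, hxc⟩ := hbij.surjOn (Finset.mem_coe.2 (Finset.mem_singleton_self c))
  have hsdiff : μ.cells \ ν.cells = {x} := Finset.eq_singleton_iff_unique_mem.2 ⟨hx, fun y hy =>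
    hbij.injOn hy hx ((Finset.mem_singleton.1 (hbij.mapsTo hy)).trans hxc.symm)⟩
  refine ⟨x, (Finset.mem_sdiff.1 hx).2, hxc, ?_⟩
  rw [Finset.insert_eq, ← hsdiff, Finset.sdiff_union_of_subset hle]

lemma exists_isRemovable_of_bead {c : ℤ} (hc : bead (diag μ) c = 1)
    (hc' : bead (diag μ) (c - 1) = 0) : ∃ x, IsRemovable μ x ∧ rsd x = c := by
  obtain ⟨ν, hν⟩ := exists_removeRibbon hc hc'
  have hIoc : Finset.Ioc (c - 1) c = {c} := by
    ext; simp only [Finset.mem_Ioc, Finset.mem_singleton]; omega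
  obtain ⟨x, hx, hxc, hcells⟩ := exists_cells_eq_insert (hIoc ▸ hν)
  exact ⟨x, ⟨hcells ▸ Finset.mem_insert_self x _, ν, by rw [hcells, Finset.erase_insert hx]⟩, hxc⟩

lemma exists_isAddable_of_bead {c : ℤ} (hc : bead (diag μ) c = 0)
    (hc' : bead (diag μ) (c - 1) = 1) : ∃ x, IsAddable μ x ∧ rsd x = c := by
  let f (c' : ℤ) : ℕ := diag μ c' + if c' ∈ ({c} : Finset ℤ) then 1 else 0
  have hfin : (Function.support f).Finite := by
    refine ((finite_support_diag μ).union (Set.finite_singleton c)).subset fun c' h => ?_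
    contrapose! h
    simp_all [f]
  obtain ⟨ν, hν⟩ := exists_diag_eq hfin fun r => by
    have hr := bead_diag μ r
    have hrc : r = c → bead (diag μ) r = 0 := fun h => h ▸ hc
    have hrc' : r = c - 1 → bead (diag μ) r = 1 := fun h => h ▸ hc'
    simp only [bead, f, Finset.mem_singleton] at hr hrc hrc' ⊢
    split_ifs at hr hrc hrc' ⊢ <;> omega
  obtain ⟨x, hx, hxc, hcells⟩ := exists_cells_eq_insert (congrFun hν)
  exact ⟨x, ⟨hx, ν, hcells⟩, hxc⟩

lemma IsCore.bead_sub {ℓ : ℕ} (hμ : IsCore ℓ μ) (hp : bead (diag μ) p = 1) :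
    bead (diag μ) (p - ℓ) = 1 := by
  refine (bead_diag μ (p - ℓ)).resolve_left fun hq => hμ ?_
  obtain ⟨ν, hν⟩ := exists_removeRibbon hp hq
  have hbij := bijOn_rsd_sdiff hν
  have hle : ν ≤ μ := le_of_diag_le fun c => (hν c).symm ▸ Nat.le_add_right _ _
  refine ⟨ν, obtainable_of_le hle, ?_, ?_⟩
  · have himage : (μ.cells \ ν.cells).image rsd = Finset.Ioc (p - ℓ) p :=
      Finset.coe_injective (by rw [Finset.coe_image, hbij.image_eq])
    rw [← Finset.card_image_of_injOn hbij.injOn, himage, Int.card_Ioc, sub_sub_cancel,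
      Int.toNat_natCast]
  · intro x hx y hy hxy
    refine hbij.injOn hx hy ?_
    have hx' := Finset.mem_Ioc.1 (hbij.mapsTo hx)
    have hy' := Finset.mem_Ioc.1 (hbij.mapsTo hy)
    have hdvd : (ℓ : ℤ) ∣ rsd x - rsd y := (ZMod.intCast_eq_intCast_iff_dvd_sub _ _ _).1 hxy.symm
    exact sub_eq_zero.1 (Int.eq_zero_of_abs_lt_dvd hdvd (abs_lt.2 (by constructor <;> omega)))

lemma IsCore.bead_sub_mul {ℓ : ℕ} (hμ : IsCore ℓ μ) (hp : bead (diag μ) p = 1) (n : ℕ) :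
    bead (diag μ) (p - n * ℓ) = 1 := by
  induction n with
  | zero => simpa using hp
  | succ n ih =>
    rw [show p - (n + 1 : ℕ) * (ℓ : ℤ) = p - n * ℓ - ℓ by push_cast; ring]
    exact hμ.bead_sub ih

end Corners

section Residues

variable {ℓ : ℕ} {μ ν : YoungDiagram}

lemma hasSum_diag (μ : YoungDiagram) (i : ZMod ℓ) :
    HasSum (fun c : ℤ => if (c : ZMod ℓ) = i then (diag μ c : ℤ) else 0) (Res ℓ μ i) := by
  have hbox : ∀ x ∈ μ.cells, HasSum
      (fun c : ℤ => if c = rsd x then if res ℓ x = i then (1 : ℤ) else 0 else 0)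
      (if res ℓ x = i then 1 else 0) := fun x _ => hasSum_ite_eq _ _
  convert hasSum_sum hbox using 1
  · ext c
    rw [diag, Finset.natCast_card_filter, Finset.ite_sum_zero]
    refine Finset.sum_congr rfl fun x _ => ?_
    by_cases hx : rsd x = c
    · simp only [res, hx, if_true]
    · simp only [hx, Ne.symm hx, if_false, ite_self]
  · rw [Res, Finset.natCast_card_filter]

lemma hasSum_diag_add (μ : YoungDiagram) (i : ZMod ℓ) (t : ℤ) :
    HasSum (fun c : ℤ => if (c : ZMod ℓ) = i then (diag μ (c + t) : ℤ) else 0)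
      (Res ℓ μ (i + (t : ZMod ℓ))) := by
  simpa [Function.comp_def] using (Equiv.addRight t).hasSum_iff.2 (hasSum_diag μ (i + (t : ZMod ℓ)))

lemma hasSum_bead_sub_bead (μ ν : YoungDiagram) (i : ZMod ℓ) :
    HasSum (fun c : ℤ => if (c : ZMod ℓ) = i then bead (diag μ) c - bead (diag ν) c else 0)
      (Res ℓ μ i - Res ℓ μ (i + 1) - (Res ℓ ν i - Res ℓ ν (i + 1))) := by
  have h (κ : YoungDiagram) := (hasSum_diag κ i).sub (hasSum_diag_add κ i 1)
  convert (h μ).sub (h ν) using 1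
  · rfl
  · ext c; simp only [bead]; split_ifs <;> ring
  · rw [Int.cast_one]

lemma hasSum_bead_pred_sub_bead (μ : YoungDiagram) (i : ZMod ℓ) :
    HasSum (fun c : ℤ => if (c : ZMod ℓ) = i then bead (diag μ) (c - 1) - bead (diag μ) c else 0)
      (excess ℓ μ i) := by
  have h := (((hasSum_ite_eq (0 : ℤ) (if i = 0 then (1 : ℤ) else 0)).add
    (hasSum_diag_add μ i (-1))).add (hasSum_diag_add μ i 1)).sub ((hasSum_diag μ i).mul_left 2)
  convert h using 1
  · rfl
  · ext c
    simp only [bead, sub_add_cancel]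
    by_cases hc : (c : ZMod ℓ) = i
    · have hbead : (if c - 1 < 0 then (1 : ℤ) else 0) - (if c < 0 then 1 else 0) =
          if c = 0 then 1 else 0 := by split_ifs <;> omega
      have hvac : (if c = 0 then if i = 0 then (1 : ℤ) else 0 else 0) = if c = 0 then 1 else 0 := by
        subst hc
        split_ifs with h h' <;> simp_all
      simp only [if_pos hc, hvac, ← hbead, ← sub_eq_add_neg]
      ring
    · have hvac : (if c = 0 then if i = 0 then (1 : ℤ) else 0 else 0) = 0 := by
        split_ifs with h hi
        · exact absurd (by rw [h, hi, Int.cast_zero]) hc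
        · rfl
        · rfl
      simp only [if_neg hc, hvac]
      ring
  · simp [excess, sub_eq_add_neg]

lemma IsJCore.excess_nonneg {J : Set (ZMod ℓ)} (hμ : IsJCore ℓ J μ) {i : ZMod ℓ} (hi : i ∈ J) :
    0 ≤ excess ℓ μ i := by
  refine (hasSum_bead_pred_sub_bead μ i).nonneg fun c => ?_
  split_ifs with hc
  · by_contra hneg
    have h := bead_diag μ c
    have h' := bead_diag μ (c - 1)
    obtain ⟨x, hx, hxc⟩ := exists_isRemovable_of_bead (μ := μ) (c := c) (by omega) (by omega)
    exact hμ x ⟨hx, by rwa [res, hxc, hc]⟩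
  · exact le_rfl

lemma exists_isAddable_of_excess_pos {i : ZMod ℓ} (hi : 0 < excess ℓ μ i) :
    ∃ x, IsAddable μ x ∧ res ℓ x = i := by
  by_contra! hnone
  refine hi.not_ge ((hasSum_bead_pred_sub_bead μ i).nonpos fun c => ?_)
  split_ifs with hc
  · by_contra hpos
    have h := bead_diag μ c
    have h' := bead_diag μ (c - 1)
    obtain ⟨x, hx, hxc⟩ := exists_isAddable_of_bead (μ := μ) (c := c) (by omega) (by omega)
    exact hnone x hx (by rw [res, hxc, hc])
  · exact le_rfl

lemma sum_excess [NeZero ℓ] (μ : YoungDiagram) : ∑ i, excess ℓ μ i = 1 := by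
  have hpred : ∑ i, Res ℓ μ (i - 1) = ∑ i, Res ℓ μ i :=
    Equiv.sum_comp (Equiv.subRight (1 : ZMod ℓ)) (Res ℓ μ)
  have hsucc : ∑ i, Res ℓ μ (i + 1) = ∑ i, Res ℓ μ i :=
    Equiv.sum_comp (Equiv.addRight (1 : ZMod ℓ)) (Res ℓ μ)
  simp only [excess, Finset.sum_sub_distrib, Finset.sum_add_distrib, hpred, hsucc,
    ← Finset.mul_sum, Finset.sum_ite_eq', Finset.mem_univ, if_true]
  ring

lemma excess_eq_of_Res_add_eq {β : ZMod ℓ → ℕ} {k : ℤ}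
    (h : ∀ i, Res ℓ μ i + β i = Res ℓ ν i + k) (i : ZMod ℓ) :
    excess ℓ μ i = excess ℓ ν i + (2 * β i - β (i - 1) - β (i + 1)) := by
  simp only [excess]
  linarith [h i, h (i - 1), h (i + 1)]

lemma IsCore.bead_le_bead (hμ : IsCore ℓ μ) (hν : IsCore ℓ ν) {k : ℤ}
    (h : ∀ i, Res ℓ μ i = Res ℓ ν i + k) (p : ℤ) : bead (diag μ) p ≤ bead (diag ν) p := by
  by_contra! hlt
  have hμp := bead_diag μ p
  have hνp := bead_diag ν p
  have hsum : HasSum (fun c : ℤ => if (c : ZMod ℓ) = p then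
      bead (diag μ) c - bead (diag ν) c else 0) 0 := by
    convert hasSum_bead_sub_bead μ ν (p : ZMod ℓ) using 1
    rw [h, h]; ring
  have hnonneg (c : ℤ) : 0 ≤ if (c : ZMod ℓ) = p then bead (diag μ) c - bead (diag ν) c else 0 := by
    split_ifs with hc
    · have hμc := bead_diag μ c
      have hνc := bead_diag ν c
      obtain ⟨t, ht⟩ := (ZMod.intCast_eq_intCast_iff_dvd_sub _ _ _).1 hc
      rcases t.eq_nat_or_neg with ⟨n, rfl | rfl⟩
      · have := hμ.bead_sub_mul (p := p) (by omega) n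
        rw [show p - n * (ℓ : ℤ) = c by linarith] at this
        omega
      · have := fun hc => hν.bead_sub_mul (p := c) hc n
        rw [show c - n * (ℓ : ℤ) = p by linarith] at this
        omega
    · exact le_rfl
  have hzero := congrFun ((hasSum_zero_iff_of_nonneg hnonneg).1 hsum) p
  rw [if_pos rfl, Pi.zero_apply] at hzero
  omega

lemma eq_of_bead_diag_eq (h : ∀ p, bead (diag μ) p = bead (diag ν) p) : μ = ν := by
  have hper : Function.Periodic (fun c => (diag μ c : ℤ) - diag ν c) 1 := fun c => by
    have := h c
    simp only [bead] at this
    linarith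
  obtain ⟨z, hz⟩ := ((finite_support_diag μ).union (finite_support_diag ν)).exists_notMem
  simp only [Set.mem_union, Function.mem_support, not_or, not_not] at hz
  refine diag_injective (funext fun c => ?_)
  have hc := hper.int_mul (z - c) c
  simp only [Int.cast_id, mul_one, add_sub_cancel, hz] at hc
  omega

lemma IsCore.eq_of_Res_eq_add (hμ : IsCore ℓ μ) (hν : IsCore ℓ ν) {k : ℤ}
    (h : ∀ i, Res ℓ μ i = Res ℓ ν i + k) : μ = ν :=
  eq_of_bead_diag_eq fun p => le_antisymm (hμ.bead_le_bead hν h p)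
    (hν.bead_le_bead hμ (k := -k) (fun i => by rw [h]; ring) p)

end Residues

section Cores

variable {ℓ : ℕ} [NeZero ℓ] {μ ν : YoungDiagram}

lemma sum_Res (μ : YoungDiagram) : ∑ i, Res ℓ μ i = μ.cells.card := by
  simp only [Res]
  rw [Finset.card_eq_sum_card_fiberwise (f := res ℓ) (t := Finset.univ) (by simp), Nat.cast_sum]

lemma card_eq_of_Res_eq_add {k : ℤ} (h : ∀ i, Res ℓ μ i = Res ℓ ν i + k) :
    (μ.cells.card : ℤ) = ν.cells.card + ℓ * k := by
  rw [← sum_Res (ℓ := ℓ) μ, ← sum_Res (ℓ := ℓ) ν]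
  simp [h, Finset.sum_add_distrib, ZMod.card]

lemma CoreStep.Res_eq (h : CoreStep ℓ μ ν) (i : ZMod ℓ) : Res ℓ μ i = Res ℓ ν i + 1 := by
  obtain ⟨hobt, hcard, hinj⟩ := h
  have hsurj : (μ.cells \ ν.cells).image (res ℓ) = Finset.univ :=
    Finset.eq_univ_of_card _ (by rw [Finset.card_image_of_injOn hinj, hcard, ZMod.card])
  have hfibre : ((μ.cells \ ν.cells).filter fun x => res ℓ x = i).card = 1 := by
    obtain ⟨x, hx, hxi⟩ := Finset.mem_image.1 (hsurj ▸ Finset.mem_univ i)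
    refine Finset.card_eq_one.2 ⟨x, Finset.eq_singleton_iff_unique_mem.2
      ⟨Finset.mem_filter.2 ⟨hx, hxi⟩, fun y hy => ?_⟩⟩
    rw [Finset.mem_filter] at hy
    exact hinj hy.1 hx (hy.2.trans hxi.symm)
  rw [Res, Res, ← card_filter_add_card_filter_sdiff hobt.le, hfibre, Nat.cast_add, Nat.cast_one]

lemma exists_Res_eq_add_of_coreSteps (h : Relation.ReflTransGen (CoreStep ℓ) μ ν) :
    ∃ m : ℕ, ∀ i, Res ℓ μ i = Res ℓ ν i + m := by
  induction h with
  | refl => exact ⟨0, fun i => by simp⟩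
  | tail _ hstep ih =>
    obtain ⟨m, hm⟩ := ih
    refine ⟨m + 1, fun i => ?_⟩
    rw [hm, hstep.Res_eq]
    push_cast
    ring

lemma exists_reachesCore (ℓ : ℕ) [NeZero ℓ] (μ : YoungDiagram) : ∃ ν, ReachesCore ℓ μ ν := by
  induction hn : μ.cells.card using Nat.strong_induction_on generalizing μ with
  | _ n ih =>
    by_cases hμ : IsCore ℓ μ
    · exact ⟨μ, Relation.ReflTransGen.refl, hμ⟩
    · obtain ⟨κ, hκ⟩ := not_not.1 hμ
      have hstep : CoreStep ℓ μ κ := hκ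
      have hcard := card_eq_of_Res_eq_add hstep.Res_eq
      have hℓ := NeZero.pos ℓ
      obtain ⟨ν, hν⟩ := ih κ.cells.card (by omega) κ rfl
      exact ⟨ν, Relation.ReflTransGen.head hstep hν.1, hν.2⟩

lemma reachesCore_of_Res_eq_add (hν : IsCore ℓ ν) {k : ℤ} (h : ∀ i, Res ℓ μ i = Res ℓ ν i + k) :
    0 ≤ k ∧ ReachesCore ℓ μ ν := by
  obtain ⟨κ, hκ⟩ := exists_reachesCore ℓ μ
  obtain ⟨m, hm⟩ := exists_Res_eq_add_of_coreSteps hκ.1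
  obtain rfl : κ = ν := hκ.2.eq_of_Res_eq_add hν (k := k - m) fun i => by linarith [hm i, h i]
  exact ⟨by linarith [hm 0, h 0, m.cast_nonneg (α := ℤ)], hκ⟩

lemma ReachesCore.Res_eq_add {k : ℤ} (h : ReachesCore ℓ μ ν)
    (hcard : (μ.cells.card : ℤ) = ν.cells.card + ℓ * k) (i : ZMod ℓ) :
    Res ℓ μ i = Res ℓ ν i + k := by
  obtain ⟨m, hm⟩ := exists_Res_eq_add_of_coreSteps h.1
  have hmk : (ℓ : ℤ) * m = ℓ * k := by linarith [card_eq_of_Res_eq_add hm]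
  rw [hm, mul_left_cancel₀ (NeZero.ne (ℓ : ℤ)) hmk]

end Cores

section JSteps

variable {ℓ : ℕ} {J : Set (ZMod ℓ)} {μ ν : YoungDiagram}

lemma Res_of_cells_eq_insert {x : ℕ × ℕ} (hx : x ∉ ν.cells) (h : μ.cells = insert x ν.cells) :
    Res ℓ μ = Res ℓ ν + Pi.single (res ℓ x) 1 := by
  ext i
  rw [Pi.add_apply, Pi.single_apply, Res, Res, h, Finset.filter_insert]
  split_ifs with hxi hix hix
  · rw [Finset.card_insert_of_notMem fun hmem => hx (Finset.mem_filter.1 hmem).1]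
    push_cast
    rfl
  · exact absurd hxi.symm hix
  · exact absurd hix.symm hxi
  · rw [add_zero]

lemma JRemoveStep.exists_Res_eq (h : JRemoveStep ℓ J μ ν) :
    ∃ j ∈ J, Res ℓ μ = Res ℓ ν + Pi.single j 1 := by
  obtain ⟨x, ⟨hx, hxJ⟩, hν⟩ := h
  refine ⟨res ℓ x, hxJ, Res_of_cells_eq_insert (hν ▸ Finset.notMem_erase x _) ?_⟩
  rw [hν, Finset.insert_erase hx.1]

lemma exists_Res_eq_add_of_jRemoveSteps (h : Relation.ReflTransGen (JRemoveStep ℓ J) μ ν) :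
    ∃ c : ZMod ℓ → ℕ, (∀ j, c j ≠ 0 → j ∈ J) ∧ ∀ i, Res ℓ μ i = Res ℓ ν i + c i := by
  induction h with
  | refl => exact ⟨0, fun j hj => absurd rfl hj, fun i => by simp⟩
  | tail _ hstep ih =>
    obtain ⟨c, hcJ, hc⟩ := ih
    obtain ⟨j, hj, hRes⟩ := hstep.exists_Res_eq
    refine ⟨c + Pi.single j 1, fun i hi => ?_, fun i => ?_⟩
    · rcases eq_or_ne i j with rfl | hij
      · exact hj
      · exact hcJ i (by simpa [hij] using hi)
    · rw [hc, hRes]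
      simp only [Pi.add_apply, Pi.single_apply]
      push_cast
      ring

lemma IsAddable.exists_jRemoveStep {x : ℕ × ℕ} (h : IsAddable μ x) (hx : res ℓ x ∈ J) :
    ∃ κ, JRemoveStep ℓ J κ μ ∧ Res ℓ κ = Res ℓ μ + Pi.single (res ℓ x) 1 := by
  obtain ⟨hxμ, κ, hκ⟩ := h
  have hμ : μ.cells = κ.cells.erase x := by rw [hκ, Finset.erase_insert hxμ]
  exact ⟨κ, ⟨x, ⟨⟨hκ ▸ Finset.mem_insert_self x _, μ, hμ⟩, hx⟩, hμ⟩,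
    Res_of_cells_eq_insert hxμ hκ⟩

end JSteps

section Growth

lemma sum_mul_laplacian {G R : Type*} [AddGroup G] [Fintype G] [CommRing R] (g : G) (f : G → R) :
    ∑ i, f i * (2 * f i - f (i - g) - f (i + g)) = ∑ i, (f i - f (i + g)) ^ 2 := by
  have hsq : ∑ i, f (i + g) ^ 2 = ∑ i, f i ^ 2 :=
    Equiv.sum_comp (Equiv.addRight g) fun i => f i ^ 2
  have hcross : ∑ i, f i * f (i - g) = ∑ i, f i * f (i + g) := by
    rw [← Equiv.sum_comp (Equiv.addRight g)]
    simp only [Equiv.coe_addRight, add_sub_cancel_right, mul_comm]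
  calc ∑ i, f i * (2 * f i - f (i - g) - f (i + g))
      = ∑ i, f i ^ 2 + ∑ i, f i ^ 2 - ∑ i, f i * f (i - g) - ∑ i, f i * f (i + g) := by
        simp only [← Finset.sum_add_distrib, ← Finset.sum_sub_distrib]
        exact Finset.sum_congr rfl fun i _ => by ring
    _ = ∑ i, f i ^ 2 + ∑ i, f (i + g) ^ 2 - ∑ i, f i * f (i + g) - ∑ i, f i * f (i + g) := by
        rw [hsq, hcross]
    _ = ∑ i, (f i - f (i + g)) ^ 2 := by
        simp only [← Finset.sum_add_distrib, ← Finset.sum_sub_distrib]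
        exact Finset.sum_congr rfl fun i _ => by ring

variable {ℓ : ℕ} [NeZero ℓ]

lemma eq_of_forall_eq_add_one {α : Type*} {f : ZMod ℓ → α} (h : ∀ i, f i = f (i + 1))
    (i j : ZMod ℓ) : f i = f j := by
  have hper : Function.Periodic f 1 := fun i => (h i).symm
  have hi (i : ZMod ℓ) : f i = f 0 := by
    simpa using hper.nat_mul_eq i.val
  rw [hi i, hi j]

lemma exists_pos_add_laplacian {d : ZMod ℓ → ℤ} (hd : 0 < ∑ i, d i) {β : ZMod ℓ → ℕ} (hβ : β ≠ 0)
    (hβd : ∀ i, β i ≠ 0 → 0 ≤ d i) :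
    ∃ i, β i ≠ 0 ∧ 0 < d i + (2 * β i - β (i - 1) - β (i + 1)) := by
  by_contra! hneg
  have hterm (i) : (β i : ℤ) * d i + β i * (2 * β i - β (i - 1) - β (i + 1)) ≤ 0 := by
    rw [← mul_add]
    rcases eq_or_ne (β i) 0 with hi | hi
    · simp [hi]
    · exact mul_nonpos_of_nonneg_of_nonpos (by positivity) (hneg i hi)
  have hpair (i) : 0 ≤ (β i : ℤ) * d i := by
    rcases eq_or_ne (β i) 0 with hi | hi
    · simp [hi]
    · exact mul_nonneg (by positivity) (hβd i hi)
  have hsum : ∑ i, (β i : ℤ) * d i + ∑ i, ((β i : ℤ) - β (i + 1)) ^ 2 ≤ 0 := by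
    rw [← sum_mul_laplacian 1 fun i => (β i : ℤ), ← Finset.sum_add_distrib]
    exact Finset.sum_nonpos fun i _ => hterm i
  have hpair_sum := Finset.sum_nonneg fun i (_ : i ∈ Finset.univ) => hpair i
  have hsq_sum : ∑ i, ((β i : ℤ) - β (i + 1)) ^ 2 = 0 :=
    le_antisymm (by linarith) (Finset.sum_nonneg fun i _ => sq_nonneg _)
  have hconst := eq_of_forall_eq_add_one (f := β) fun i => by
    have hi := (Finset.sum_eq_zero_iff_of_nonneg fun i _ => sq_nonneg _).1 hsq_sum i
      (Finset.mem_univ i)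
    exact_mod_cast sub_eq_zero.1 (pow_eq_zero_iff two_ne_zero |>.1 hi)
  obtain ⟨i, hi⟩ := Function.ne_iff.1 hβ
  have hi' : 0 < (β i : ℤ) := by exact_mod_cast Nat.pos_of_ne_zero hi
  have hfactor : ∑ j, (β j : ℤ) * d j = β i * ∑ j, d j := by
    rw [Finset.mul_sum]
    exact Finset.sum_congr rfl fun j _ => by rw [hconst j i]
  linarith [mul_pos hi' hd]

lemma IsJCore.exists_jRemoveSteps {J : Set (ZMod ℓ)} {ν lam : YoungDiagram} (hν : IsJCore ℓ J ν)
    {β : ZMod ℓ → ℕ} (hβ : ∀ j, β j ≠ 0 → j ∈ J) {k : ℤ}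
    (h : ∀ i, Res ℓ lam i + β i = Res ℓ ν i + k) :
    ∃ μ, (∀ i, Res ℓ μ i = Res ℓ ν i + k) ∧ Relation.ReflTransGen (JRemoveStep ℓ J) μ lam := by
  induction β using WellFoundedLT.induction generalizing lam with
  | ind β ih =>
    rcases eq_or_ne β 0 with rfl | hβ0
    · exact ⟨lam, fun i => by simpa using h i, Relation.ReflTransGen.refl⟩
    obtain ⟨i, hi, hpos⟩ := exists_pos_add_laplacian (d := excess ℓ ν)
      (by rw [sum_excess]; exact one_pos) hβ0 fun i hi => hν.excess_nonneg (hβ i hi)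
    rw [← excess_eq_of_Res_add_eq h] at hpos
    obtain ⟨x, hx, rfl⟩ := exists_isAddable_of_excess_pos hpos
    obtain ⟨κ, hstep, hκ⟩ := hx.exists_jRemoveStep (hβ _ hi)
    have hle : Pi.single (res ℓ x) 1 ≤ β := fun j => by
      rw [Pi.single_apply]; split_ifs with hj
      · exact hj ▸ Nat.one_le_iff_ne_zero.2 hi
      · exact Nat.zero_le _
    obtain ⟨β', rfl⟩ := exists_add_of_le hle
    obtain ⟨μ, hμ, hsteps⟩ := ih β' (lt_add_of_pos_left β' (Pi.single_pos.2 one_pos))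
      (lam := κ) (fun j hj => hβ j (by simp [hj])) fun j => by
        rw [hκ, ← h j]
        simp only [Pi.add_apply, Pi.single_apply]
        push_cast
        ring
    exact ⟨μ, hμ, hsteps.tail hstep⟩

end Growth

theorem leaf_order_iff_general (ℓ : ℕ) [NeZero ℓ] (J : Set (ZMod ℓ))
    (ν₁ ν₂ : YoungDiagram) (h₁ : IsCore ℓ ν₁) (h₁J : IsJCore ℓ J ν₁)
    (h₂J : IsJCore ℓ J ν₂) (r₁ r₂ : ℕ) :
    (∃ c : ZMod ℓ → ℕ, (∀ j, c j ≠ 0 → j ∈ J) ∧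
      ∀ i, (Res ℓ ν₁ i + (r₁ : ℤ) * delta ℓ i) - (Res ℓ ν₂ i + (r₂ : ℤ) * delta ℓ i)
        = (c i : ℤ)) ↔
    (r₂ ≤ r₁ ∧ ∃ lam : YoungDiagram, ReachesCore ℓ lam ν₁ ∧
      lam.cells.card = ν₁.cells.card + ℓ * (r₁ - r₂) ∧ JReaches ℓ J lam ν₂) := by
  simp only [delta, mul_one]
  constructor
  · rintro ⟨c, hcJ, hc⟩
    obtain ⟨lam, hlam, hsteps⟩ := h₁J.exists_jRemoveSteps (lam := ν₂) (k := r₁ - r₂) hcJ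
      fun i => by linarith [hc i]
    obtain ⟨hk, hcore⟩ := reachesCore_of_Res_eq_add h₁ hlam
    have hle : r₂ ≤ r₁ := by omega
    refine ⟨hle, lam, hcore, ?_, hsteps, h₂J⟩
    zify [hle]
    exact card_eq_of_Res_eq_add hlam
  · rintro ⟨hle, lam, hcore, hcard, hsteps, -⟩
    zify [hle] at hcard
    obtain ⟨c, hcJ, hc⟩ := exists_Res_eq_add_of_jRemoveSteps hsteps
    exact ⟨c, hcJ, fun i => by linarith [hc i, hcore.Res_eq_add hcard i]⟩

/-- Let `θ` be `J`-standard with `∑ θ_i ≠ 0`, let `ν₁, ν₂` be both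
`ℓ`-cores and `J`-cores and `r₁, r₂ ∈ ℕ`.  Then `(Res_ℓ(ν₁) + r₁·δ_ℓ) - (Res_ℓ(ν₂) + r₂·δ_ℓ)`
is a nonnegative integer combination of the basis vectors `e_j`, `j ∈ J`, iff `r₁ ≥ r₂`
and there is a partition `λ` with `ℓ`-core `ν₁`, `|λ| = |ν₁| + ℓ(r₁ - r₂)` and `J`-core `ν₂`. -/
theorem leaf_order_iff (ℓ : ℕ) [NeZero ℓ] (hℓ : 2 ≤ ℓ) (J : Set (ZMod ℓ))
    (θ : ZMod ℓ → ℂ) (hst : JStandard ℓ J θ) (ha : ∑ i : ZMod ℓ, θ i ≠ 0)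
    (ν₁ ν₂ : YoungDiagram) (h₁ : IsCore ℓ ν₁) (h₁J : IsJCore ℓ J ν₁)
    (h₂ : IsCore ℓ ν₂) (h₂J : IsJCore ℓ J ν₂) (r₁ r₂ : ℕ) :
    (∃ c : ZMod ℓ → ℕ, (∀ j, c j ≠ 0 → j ∈ J) ∧
      ∀ i, (Res ℓ ν₁ i + (r₁ : ℤ) * delta ℓ i) - (Res ℓ ν₂ i + (r₂ : ℤ) * delta ℓ i)
        = (c i : ℤ)) ↔
    (r₂ ≤ r₁ ∧ ∃ lam : YoungDiagram, ReachesCore ℓ lam ν₁ ∧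
      lam.cells.card = ν₁.cells.card + ℓ * (r₁ - r₂) ∧ JReaches ℓ J lam ν₂) :=
  leaf_order_iff_general ℓ J ν₁ ν₂ h₁ h₁J h₂J r₁ r₂

end CM
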